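/- Let K be a compact subset of ℝ^d and let B be a separable Banach space with an injective continuous linear map ι : B → C(K, ℝ). Let {X₁(x)}_{x∈K} and {X₂(x)}_{x∈K} be two centered Gaussian random fields on K with almost surely continuous sample paths, defined on a common probability space, which are independent as random elements of C(K, ℝ). Then for every r > 0, P( X₁ + X₂ ∈ ι({h ∈ B : ‖h‖_B ≤ r}) ) ≤ P( X₁ ∈ ι({h ∈ B : ‖h‖_B ≤ r}) ); equivalently, P(X₁ + X₂ ∈ ι(B) and ‖X₁ + X₂‖_B ≤ r) ≤ P(X₁ ∈ ι(B) and ‖X₁‖_B ≤ r). -/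

import Mathlib

open MeasureTheory ProbabilityTheory

/-
The Prékopa–Leindler inequality is inherited by products, affine images and log-concave
densities. For Lebesgue measure on `ℝ` one divides the two functions by
their suprema, applies `|A| + |B| ≤ |A + B|` to their superlevel sets, integrates over the levels
and concludes by AM-GM. Hence every Gaussian measure on a finite-dimensional space satisfies it,
and for a symmetric measure the indicators of `D - y`, `D + y` and `D`, with `D` convex and
symmetric, give Anderson's inequality `μ (D - y) ≤ μ D`.

In a locally convex space, a closed convex symmetric set is a countable intersection of slabs
`|l n| ≤ c n`, so Anderson's inequality persists, and conditioning on `X₂ = y` handles the sum.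
The image of a ball of `B` is convex and symmetric but need not be closed. By tightness on `B`,
though, the law of `X₁ + X₂` puts almost all of its mass on this image on the images of compact
convex symmetric subsets of the ball, and these are closed.
-/

open scoped ENNReal Pointwise

lemma volume_add_volume_le_volume_add_of_isCompact {A B : Set ℝ} (hA : IsCompact A)
    (hB : IsCompact B) (hA₀ : A.Nonempty) (hB₀ : B.Nonempty) :
    volume A + volume B ≤ volume (A + B) := by
  obtain ⟨a, haA, ha⟩ := hA.exists_isGreatest hA₀
  obtain ⟨b, hbB, hb⟩ := hB.exists_isLeast hB₀
  -- The translates `b + A` and `a + B` lie in `A + B` on either side of the point `a + b`.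
  have hinter : (b +ᵥ A) ∩ (a +ᵥ B) ⊆ {a + b} := by
    rintro _ ⟨⟨x, hx, rfl⟩, ⟨y, hy, hxy⟩⟩
    have hxa : x ≤ a := ha hx
    have hby : b ≤ y := hb hy
    simp only [vadd_eq_add, Set.mem_singleton_iff] at hxy ⊢
    linarith
  have hdisj : AEDisjoint volume (b +ᵥ A) (a +ᵥ B) :=
    measure_mono_null hinter Real.volume_singleton
  have hunion : (b +ᵥ A) ∪ (a +ᵥ B) ⊆ A + B :=
    Set.union_subset (add_comm A B ▸ Set.vadd_set_subset_add hbB) (Set.vadd_set_subset_add haA)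
  calc volume A + volume B = volume (b +ᵥ A) + volume (a +ᵥ B) := by
        rw [measure_vadd, measure_vadd]
    _ = volume ((b +ᵥ A) ∪ (a +ᵥ B)) :=
        (measure_union₀ (hB.vadd a).measurableSet.nullMeasurableSet hdisj).symm
    _ ≤ volume (A + B) := measure_mono hunion

lemma volume_add_volume_le_volume_add {A B : Set ℝ} (hA : MeasurableSet A) (hB : MeasurableSet B)
    (hA₀ : A.Nonempty) (hB₀ : B.Nonempty) :
    volume A + volume B ≤ volume (A + B) := by
  obtain ⟨a, ha⟩ := hA₀
  obtain ⟨b, hb⟩ := hB₀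
  rw [hA.measure_eq_iSup_isCompact, hB.measure_eq_iSup_isCompact]
  simp only [iSup_and']
  refine ENNReal.biSup_add_biSup_le' ⟨∅, A.empty_subset, isCompact_empty⟩
    ⟨∅, B.empty_subset, isCompact_empty⟩ ?_
  rintro C ⟨hCA, hC⟩ D ⟨hDB, hD⟩
  calc volume C + volume D ≤ volume (insert a C) + volume (insert b D) := by
        gcongr <;> exact Set.subset_insert _ _
    _ ≤ volume (insert a C + insert b D) :=
        volume_add_volume_le_volume_add_of_isCompact (hC.insert a) (hD.insert b)
          (Set.insert_nonempty _ _) (Set.insert_nonempty _ _)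
    _ ≤ volume (A + B) :=
        measure_mono (Set.add_subset_add (Set.insert_subset ha hCA) (Set.insert_subset hb hDB))

lemma mul_le_sq_of_add_le_two_mul {x y z : ℝ≥0∞} (hxyz : x + y ≤ 2 * z) : x * y ≤ z ^ 2 := by
  rcases eq_or_ne z ∞ with rfl | hz
  · simp
  have hxy : x + y ≠ ∞ := ne_top_of_le_ne_top (ENNReal.mul_ne_top ENNReal.ofNat_ne_top hz) hxyz
  lift x to NNReal using (ENNReal.add_ne_top.1 hxy).1
  lift y to NNReal using (ENNReal.add_ne_top.1 hxy).2
  lift z to NNReal using hz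
  norm_cast at hxyz ⊢
  have hsq : 4 * (x * y) ≤ 4 * z ^ 2 :=
    calc 4 * (x * y) = 4 * x * y := by ring
      _ ≤ (x + y) ^ 2 := four_mul_le_sq_add x y
      _ ≤ (2 * z) ^ 2 := by gcongr
      _ = 4 * z ^ 2 := by ring
  exact le_of_mul_le_mul_left hsq four_pos

lemma antitone_measure_ofReal_lt {α : Type*} [MeasurableSpace α] (μ : Measure α)
    (u : α → ℝ≥0∞) : Antitone fun t : ℝ ↦ μ {x | ENNReal.ofReal t < u x} :=
  fun _ _ hst ↦ measure_mono fun _ hx ↦ (ENNReal.ofReal_le_ofReal hst).trans_lt hx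

lemma lintegral_eq_setLIntegral_Ioo_measure_lt {α : Type*} [MeasurableSpace α] {μ : Measure α}
    {u : α → ℝ≥0∞} (hu : AEMeasurable u μ) (hu_le : ∀ x, u x ≤ 1) :
    ∫⁻ x, u x ∂μ = ∫⁻ t in Set.Ioo (0 : ℝ) 1, μ {x | ENNReal.ofReal t < u x} := by
  have hu_top (x : α) : u x ≠ ∞ := ne_top_of_le_ne_top ENNReal.one_ne_top (hu_le x)
  have hlevel : ∀ t ∈ Set.Ioi (0 : ℝ),
      μ {x | t < (u x).toReal} = μ {x | ENNReal.ofReal t < u x} := fun t ht ↦ by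
    simp only [ENNReal.ofReal_lt_iff_lt_toReal (Set.mem_Ioi.1 ht).le (hu_top _)]
  have hzero : ∀ t ∈ Set.Ici (1 : ℝ), μ {x | ENNReal.ofReal t < u x} = 0 := fun t ht ↦ by
    have hempty : {x | ENNReal.ofReal t < u x} = ∅ := Set.eq_empty_of_forall_notMem fun x hx ↦
      absurd (hx.trans_le (hu_le x)) (not_lt.2 (ENNReal.one_le_ofReal.2 ht))
    rw [hempty, measure_empty]
  calc ∫⁻ x, u x ∂μ = ∫⁻ x, ENNReal.ofReal (u x).toReal ∂μ := by
        simp only [ENNReal.ofReal_toReal (hu_top _)]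
    _ = ∫⁻ t in Set.Ioi (0 : ℝ), μ {x | t < (u x).toReal} :=
        lintegral_eq_lintegral_meas_lt μ (.of_forall fun _ ↦ ENNReal.toReal_nonneg)
          hu.ennreal_toReal
    _ = ∫⁻ t in Set.Ioi (0 : ℝ), μ {x | ENNReal.ofReal t < u x} :=
        setLIntegral_congr_fun measurableSet_Ioi hlevel
    _ = ∫⁻ t in Set.Ioo (0 : ℝ) 1, μ {x | ENNReal.ofReal t < u x} := by
        rw [← Set.Ioo_union_Ici_eq_Ioi one_pos, lintegral_union measurableSet_Ici
          (Set.disjoint_left.2 fun _ h h' ↦ h.2.not_ge h'),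
          setLIntegral_congr_fun measurableSet_Ici hzero, lintegral_zero, add_zero]

lemma lintegral_eq_iSup_lintegral_min_natCast {α : Type*} [MeasurableSpace α] {μ : Measure α}
    {f : α → ℝ≥0∞} (hf : Measurable f) :
    ∫⁻ x, f x ∂μ = ⨆ n : ℕ, ∫⁻ x, min (f x) n ∂μ := by
  rw [← lintegral_iSup (fun n ↦ hf.min measurable_const)
    fun m n hmn x ↦ min_le_min le_rfl (Nat.cast_le.2 hmn)]
  simp only [← inf_iSup_eq, ENNReal.iSup_natCast, inf_top_eq]

/-- The midpoint Prékopa–Leindler inequality for a measure `μ`, a functional form of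
log-concavity. It is stated for `ℝ≥0∞`-valued functions, with the geometric mean
`√(f x * g y)` squared away on both sides. -/
def MidpointPrekopaLeindler {V : Type*} [AddCommGroup V] [Module ℝ V] [MeasurableSpace V]
    (μ : Measure V) : Prop :=
  ∀ ⦃f g h : V → ℝ≥0∞⦄, Measurable f → Measurable g → Measurable h →
    (∀ x y, f x * g y ≤ h (midpoint ℝ x y) ^ 2) →
    (∫⁻ x, f x ∂μ) * ∫⁻ x, g x ∂μ ≤ (∫⁻ x, h x ∂μ) ^ 2

section Real

variable {f g h : ℝ → ℝ≥0∞}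

lemma volume_lt_add_volume_lt_le (hf : Measurable f) (hg : Measurable g)
    (hfgh : ∀ x y, f x * g y ≤ h (midpoint ℝ x y) ^ 2) {t : ℝ≥0∞}
    (htf : t < ⨆ x, f x) (htg : t < ⨆ x, g x) :
    volume {x | t < f x} + volume {x | t < g x} ≤ 2 * volume {x | t < h x} := by
  have hsub : {x | t < f x} + {x | t < g x} ⊆ (2⁻¹ * ·) ⁻¹' {x | t < h x} := by
    rintro _ ⟨x, hx, y, hy, rfl⟩
    have hlt : t ^ 2 < h (midpoint ℝ x y) ^ 2 := by
      rw [sq t]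
      exact (ENNReal.mul_lt_mul hx hy).trans_le (hfgh x y)
    rw [midpoint_eq_smul_add, invOf_eq_inv, smul_eq_mul] at hlt
    exact lt_of_pow_lt_pow_left' 2 hlt
  calc volume {x | t < f x} + volume {x | t < g x}
      ≤ volume ({x | t < f x} + {x | t < g x}) :=
        volume_add_volume_le_volume_add (measurableSet_lt measurable_const hf)
          (measurableSet_lt measurable_const hg) (lt_iSup_iff.1 htf) (lt_iSup_iff.1 htg)
    _ ≤ volume ((2⁻¹ * ·) ⁻¹' {x | t < h x}) := measure_mono hsub
    _ = 2 * volume {x | t < h x} := by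
        rw [Real.volume_preimage_mul_left (by norm_num)]
        simp

lemma lintegral_add_lintegral_le_of_iSup_eq_one (hf : Measurable f) (hg : Measurable g)
    (hh : Measurable h) (hf₁ : ⨆ x, f x = 1) (hg₁ : ⨆ x, g x = 1)
    (hfgh : ∀ x y, f x * g y ≤ h (midpoint ℝ x y) ^ 2) :
    (∫⁻ x, f x) + ∫⁻ x, g x ≤ 2 * ∫⁻ x, h x := by
  have hf_le (x : ℝ) : f x ≤ 1 := hf₁ ▸ le_iSup f x
  have hg_le (x : ℝ) : g x ≤ 1 := hg₁ ▸ le_iSup g x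
  have hfgh_min (x y : ℝ) : f x * g y ≤ min (h (midpoint ℝ x y)) 1 ^ 2 := by
    rcases min_choice (h (midpoint ℝ x y)) 1 with hmin | hmin <;> rw [hmin]
    · exact hfgh x y
    · exact (mul_le_one' (hf_le x) (hg_le y)).trans_eq (one_pow 2).symm
  calc (∫⁻ x, f x) + ∫⁻ x, g x
      = ∫⁻ t in Set.Ioo (0 : ℝ) 1,
          (volume {x | ENNReal.ofReal t < f x} + volume {x | ENNReal.ofReal t < g x}) := by
        rw [lintegral_eq_setLIntegral_Ioo_measure_lt hf.aemeasurable hf_le,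
          lintegral_eq_setLIntegral_Ioo_measure_lt hg.aemeasurable hg_le,
          lintegral_add_left (antitone_measure_ofReal_lt volume f).measurable]
    _ ≤ ∫⁻ t in Set.Ioo (0 : ℝ) 1, 2 * volume {x | ENNReal.ofReal t < min (h x) 1} := by
        refine setLIntegral_mono' measurableSet_Ioo fun t ht ↦ ?_
        have ht₁ : ENNReal.ofReal t < 1 := ENNReal.ofReal_lt_one.2 ht.2
        exact volume_lt_add_volume_lt_le hf hg hfgh_min (hf₁ ▸ ht₁) (hg₁ ▸ ht₁)
    _ = 2 * ∫⁻ x, min (h x) 1 := by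
        rw [lintegral_const_mul _ (antitone_measure_ofReal_lt volume _).measurable,
          ← lintegral_eq_setLIntegral_Ioo_measure_lt (hh.min measurable_const).aemeasurable
            fun x ↦ min_le_right _ _]
    _ ≤ 2 * ∫⁻ x, h x := by gcongr; exact min_le_left _ _

lemma lintegral_mul_lintegral_le_of_iSup_ne_top (hf : Measurable f) (hg : Measurable g)
    (hh : Measurable h) (hf_top : ⨆ x, f x ≠ ∞) (hg_top : ⨆ x, g x ≠ ∞)
    (hfgh : ∀ x y, f x * g y ≤ h (midpoint ℝ x y) ^ 2) :
    (∫⁻ x, f x) * ∫⁻ x, g x ≤ (∫⁻ x, h x) ^ 2 := by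
  set a := ⨆ x, f x
  set b := ⨆ x, g x
  rcases eq_or_ne a 0 with ha₀ | ha₀
  · simp [ENNReal.iSup_eq_zero.1 ha₀]
  rcases eq_or_ne b 0 with hb₀ | hb₀
  · simp [ENNReal.iSup_eq_zero.1 hb₀]
  have hab₀ : a * b ≠ 0 := mul_ne_zero ha₀ hb₀
  have hab_top : a * b ≠ ∞ := ENNReal.mul_ne_top hf_top hg_top
  have hab_inv : (a * b)⁻¹ = a⁻¹ * b⁻¹ := ENNReal.mul_inv (.inl ha₀) (.inl hf_top)
  obtain ⟨c, hc⟩ : ∃ c : ℝ≥0∞, c ^ 2 = (a * b)⁻¹ :=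
    ⟨(a * b)⁻¹ ^ (2⁻¹ : ℝ), by rw [← ENNReal.rpow_natCast, ← ENNReal.rpow_mul]; simp⟩
  have hscaled : (∫⁻ x, a⁻¹ * f x) + ∫⁻ x, b⁻¹ * g x ≤ 2 * ∫⁻ x, c * h x := by
    refine lintegral_add_lintegral_le_of_iSup_eq_one (hf.const_mul _) (hg.const_mul _)
      (hh.const_mul _) ?_ ?_ fun x y ↦ ?_
    · rw [← ENNReal.mul_iSup, ENNReal.inv_mul_cancel ha₀ hf_top]
    · rw [← ENNReal.mul_iSup, ENNReal.inv_mul_cancel hb₀ hg_top]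
    · rw [mul_mul_mul_comm, mul_pow, hc, hab_inv]
      gcongr
      exact hfgh x y
  have hprod := mul_le_sq_of_add_le_two_mul hscaled
  rwa [lintegral_const_mul _ hf, lintegral_const_mul _ hg, lintegral_const_mul _ hh,
    mul_mul_mul_comm, mul_pow, hc, hab_inv, ← hab_inv,
    ENNReal.mul_le_mul_iff_right (ENNReal.inv_ne_zero.2 hab_top) (ENNReal.inv_ne_top.2 hab₀)]
    at hprod

lemma midpointPrekopaLeindler_volume : MidpointPrekopaLeindler (volume : Measure ℝ) := by
  intro f g h hf hg hh hfgh
  rw [lintegral_eq_iSup_lintegral_min_natCast hf, lintegral_eq_iSup_lintegral_min_natCast hg]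
  simp only [ENNReal.iSup_mul, ENNReal.mul_iSup, iSup_le_iff]
  have hmin_top (u : ℝ → ℝ≥0∞) (n : ℕ) : ⨆ x, min (u x) n ≠ ∞ :=
    ne_top_of_le_ne_top (ENNReal.natCast_ne_top n) (iSup_le fun x ↦ min_le_right _ _)
  intro n m
  exact lintegral_mul_lintegral_le_of_iSup_ne_top (hf.min measurable_const)
    (hg.min measurable_const) hh (hmin_top f m) (hmin_top g n)
    fun x y ↦ (mul_le_mul' (min_le_left _ _) (min_le_left _ _)).trans (hfgh x y)

end Real

namespace MidpointPrekopaLeindler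

variable {V W : Type*} [AddCommGroup V] [Module ℝ V] [MeasurableSpace V]
  [AddCommGroup W] [Module ℝ W] [MeasurableSpace W] {μ : Measure V} {ν : Measure W}

lemma dirac (x : V) : MidpointPrekopaLeindler (Measure.dirac x) := by
  intro f g h hf hg hh hfgh
  simpa only [lintegral_dirac' x hf, lintegral_dirac' x hg, lintegral_dirac' x hh, midpoint_self]
    using hfgh x x

lemma withDensity (hμ : MidpointPrekopaLeindler μ) {φ : V → ℝ≥0∞} (hφ : Measurable φ)
    (hφ_mid : ∀ x y, φ x * φ y ≤ φ (midpoint ℝ x y) ^ 2) :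
    MidpointPrekopaLeindler (μ.withDensity φ) := by
  intro f g h hf hg hh hfgh
  simp only [lintegral_withDensity_eq_lintegral_mul _ hφ, hf, hg, hh]
  refine hμ (hφ.mul hf) (hφ.mul hg) (hφ.mul hh) fun x y ↦ ?_
  simp only [Pi.mul_apply]
  rw [mul_mul_mul_comm, mul_pow]
  gcongr
  exacts [hφ_mid x y, hfgh x y]

lemma map (hμ : MidpointPrekopaLeindler μ) {T : V →ᵃ[ℝ] W} (hT : Measurable T) :
    MidpointPrekopaLeindler (μ.map T) := by
  intro f g h hf hg hh hfgh
  simp only [lintegral_map, hf, hg, hh, hT]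
  refine hμ (hf.comp hT) (hg.comp hT) (hh.comp hT) fun x y ↦ ?_
  simpa only [Function.comp_apply, AffineMap.map_midpoint] using hfgh (T x) (T y)

lemma prod [SFinite ν] (hμ : MidpointPrekopaLeindler μ) (hν : MidpointPrekopaLeindler ν) :
    MidpointPrekopaLeindler (μ.prod ν) := by
  intro f g h hf hg hh hfgh
  rw [lintegral_prod _ hf.aemeasurable, lintegral_prod _ hg.aemeasurable,
    lintegral_prod _ hh.aemeasurable]
  refine hμ hf.lintegral_prod_right' hg.lintegral_prod_right' hh.lintegral_prod_right'
    fun x y ↦ hν (by fun_prop) (by fun_prop) (by fun_prop) fun z w ↦ ?_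
  simpa only [midpoint_eq_smul_add, Prod.mk_add_mk, Prod.smul_mk] using hfgh (x, z) (y, w)

lemma pi {n : ℕ} {V : Fin n → Type*} [∀ i, AddCommGroup (V i)] [∀ i, Module ℝ (V i)]
    [∀ i, MeasurableSpace (V i)] {μ : ∀ i, Measure (V i)} [∀ i, SigmaFinite (μ i)]
    (hμ : ∀ i, MidpointPrekopaLeindler (μ i)) : MidpointPrekopaLeindler (Measure.pi μ) := by
  induction n with
  | zero => simpa only [Measure.pi_of_empty _ 0] using dirac 0
  | succ n ih =>
    rw [← (measurePreserving_piFinSuccAbove μ 0).symm.map_eq]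
    have hcons : ⇑(Fin.consLinearEquiv ℝ V).toLinearMap.toAffineMap =
        (MeasurableEquiv.piFinSuccAbove V 0).symm := by
      ext x i
      exact Fin.cases rfl (fun _ ↦ rfl) i
    rw [← hcons]
    refine ((hμ 0).prod (ih fun i ↦ hμ i.succ)).map ?_
    rw [hcons]
    exact (MeasurableEquiv.piFinSuccAbove V 0).symm.measurable

lemma measure_preimage_add_le [MeasurableAdd V] [MeasurableNeg V] [μ.IsNegInvariant]
    (hμ : MidpointPrekopaLeindler μ) {D : Set V} (hD : MeasurableSet D) (hconv : Convex ℝ D)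
    (hneg : ∀ x ∈ D, -x ∈ D) (y : V) : μ ((y + ·) ⁻¹' D) ≤ μ D := by
  have hDy (z : V) : MeasurableSet ((z + ·) ⁻¹' D) := measurable_const_add z hD
  have hreflect : μ ((-y + ·) ⁻¹' D) = μ ((y + ·) ⁻¹' D) := by
    rw [← Measure.measure_preimage_neg μ ((y + ·) ⁻¹' D)]
    congr 1
    ext x
    exact ⟨fun hx ↦ by simpa [add_comm] using hneg _ hx,
      fun hx ↦ by simpa [add_comm] using hneg _ hx⟩
  have hindicator (u v : V) : ((y + ·) ⁻¹' D).indicator 1 u * ((-y + ·) ⁻¹' D).indicator 1 v ≤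
      (D.indicator 1 (midpoint ℝ u v) : ℝ≥0∞) ^ 2 := by
    by_cases huv : y + u ∈ D ∧ -y + v ∈ D
    · have hmid : midpoint ℝ u v ∈ D := by
        simpa [midpoint_eq_smul_add, add_add_add_comm y u] using hconv.midpoint_mem huv.1 huv.2
      simp [hmid, Set.indicator, huv]
    · rcases not_and_or.1 huv with hu | hv
      · simp [hu]
      · simp [hv]
  have hsq : μ ((y + ·) ⁻¹' D) ^ 2 ≤ μ D ^ 2 := by
    simpa only [lintegral_indicator_one, hDy, hD, hreflect, ← sq] using
      hμ (measurable_one.indicator (hDy y)) (measurable_one.indicator (hDy (-y)))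
        (measurable_one.indicator hD) hindicator
  exact (ENNReal.pow_le_pow_left_iff two_ne_zero).1 hsq

end MidpointPrekopaLeindler

lemma gaussianPDF_mul_gaussianPDF_le (m : ℝ) (v : NNReal) (x y : ℝ) :
    gaussianPDF m v x * gaussianPDF m v y ≤ gaussianPDF m v (midpoint ℝ x y) ^ 2 := by
  have hexp : -(x - m) ^ 2 / (2 * v) + -(y - m) ^ 2 / (2 * v) ≤
      2 * (-(midpoint ℝ x y - m) ^ 2 / (2 * v)) := by
    rw [midpoint_eq_smul_add, invOf_eq_inv, smul_eq_mul, ← add_div, ← mul_div_assoc]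
    gcongr
    linarith [sq_nonneg (x - y)]
  simp only [gaussianPDF]
  rw [← ENNReal.ofReal_mul (gaussianPDFReal_nonneg _ _ _),
    ← ENNReal.ofReal_pow (gaussianPDFReal_nonneg _ _ _)]
  simp only [gaussianPDFReal]
  rw [mul_mul_mul_comm, ← sq, mul_pow, ← Real.exp_add, ← Real.exp_nat_mul]
  gcongr
  exact_mod_cast hexp

lemma midpointPrekopaLeindler_gaussianReal (m : ℝ) (v : NNReal) :
    MidpointPrekopaLeindler (gaussianReal m v) := by
  rcases eq_or_ne v 0 with rfl | hv
  · rw [gaussianReal_zero_var]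
    exact .dirac m
  · rw [gaussianReal_of_var_ne_zero m hv]
    exact midpointPrekopaLeindler_volume.withDensity (measurable_gaussianPDF m v)
      (gaussianPDF_mul_gaussianPDF_le m v)

section Gaussian

variable {n : ℕ}

lemma midpointPrekopaLeindler_stdGaussian :
    MidpointPrekopaLeindler (stdGaussian (EuclideanSpace ℝ (Fin n))) := by
  rw [← map_pi_eq_stdGaussian]
  exact (MidpointPrekopaLeindler.pi fun _ ↦ midpointPrekopaLeindler_gaussianReal 0 1).map
    (T := (WithLp.linearEquiv 2 ℝ (Fin n → ℝ)).symm.toLinearMap.toAffineMap)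
    (WithLp.measurable_toLp 2 _)

open scoped MatrixOrder in
lemma midpointPrekopaLeindler_multivariateGaussian (m : EuclideanSpace ℝ (Fin n))
    (S : Matrix (Fin n) (Fin n) ℝ) : MidpointPrekopaLeindler (multivariateGaussian m S) :=
  midpointPrekopaLeindler_stdGaussian.map
    (T := AffineMap.const ℝ (EuclideanSpace ℝ (Fin n)) m +
      (Matrix.toEuclideanCLM (𝕜 := ℝ) (CFC.sqrt S)).toLinearMap.toAffineMap)
    (by dsimp; fun_prop)

lemma exists_eq_multivariateGaussian {ι : Type*} [Fintype ι] [DecidableEq ι]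
    (ν : Measure (EuclideanSpace ℝ ι)) [IsGaussian ν] :
    ∃ S : Matrix ι ι ℝ, ν = multivariateGaussian (∫ x, x ∂ν) S := by
  let b := (EuclideanSpace.basisFun ι ℝ).toBasis
  let S : Matrix ι ι ℝ := (covarianceBilin ν).toBilinForm.toMatrix b
  have hSapply (x y : EuclideanSpace ℝ ι) : covarianceBilin ν x y = x ⬝ᵥ S.mulVec y :=
    (covarianceBilin ν).toBilinForm.apply_eq_dotProduct_toMatrix_mulVec b x y
  have hS : S.PosSemidef := by
    refine .of_dotProduct_mulVec_nonneg (Matrix.IsHermitian.ext fun i j ↦ ?_) fun x ↦ ?_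
    · simpa only [S, LinearMap.BilinForm.toMatrix_apply, ContinuousLinearMap.toBilinForm_apply,
        star_trivial] using covarianceBilin_comm (b j) (b i)
    · simpa only [hSapply, star_trivial] using
        covarianceBilin_self_nonneg (μ := ν) (WithLp.toLp 2 x)
  refine ⟨S, IsGaussian.ext (by simp) ?_⟩
  ext x y
  rw [covarianceBilin_multivariateGaussian hS, hSapply]

variable {F : Type*} [NormedAddCommGroup F] [NormedSpace ℝ F] [FiniteDimensional ℝ F]
  [MeasurableSpace F] [BorelSpace F]

lemma midpointPrekopaLeindler_of_isGaussian (ν : Measure F) [IsGaussian ν] :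
    MidpointPrekopaLeindler ν := by
  let e : F ≃L[ℝ] EuclideanSpace ℝ (Fin (Module.finrank ℝ F)) := toEuclidean
  obtain ⟨S, hS⟩ := exists_eq_multivariateGaussian (ν.map e)
  have hν : (ν.map e).map e.symm = ν := by
    rw [Measure.map_map (by fun_prop) (by fun_prop), e.symm_comp_self, Measure.map_id]
  rw [← hν, hS]
  exact (midpointPrekopaLeindler_multivariateGaussian _ S).map
    (T := e.symm.toLinearMap.toAffineMap) (by dsimp; fun_prop)

end Gaussian

lemma isNegInvariant_of_isGaussian {F : Type*} [NormedAddCommGroup F] [NormedSpace ℝ F]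
    [CompleteSpace F] [SecondCountableTopology F] [MeasurableSpace F] [BorelSpace F]
    (ν : Measure F) [IsGaussian ν] (hν : ∀ L : StrongDual ℝ F, ν[L] = 0) :
    ν.IsNegInvariant := by
  have hmap : ν.neg = ν.map (-ContinuousLinearMap.id ℝ F) := rfl
  have : IsGaussian ν.neg := hmap ▸ isGaussian_map _
  refine ⟨Measure.ext_of_charFunDual (funext fun L ↦ ?_)⟩
  have hcomp : L ∘L (-ContinuousLinearMap.id ℝ F) = -L := by ext; simp
  have hvar : Var[(-L : StrongDual ℝ F); ν] = Var[L; ν] := variance_neg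
  rw [hmap, charFunDual_map, hcomp, IsGaussian.charFunDual_eq, IsGaussian.charFunDual_eq,
    integral_complex_ofReal, integral_complex_ofReal, hν, hν, hvar]

lemma measure_preimage_add_preimage_le_of_isGaussian {E : Type*} [AddCommGroup E] [Module ℝ E]
    [TopologicalSpace E] [MeasurableSpace E] [BorelSpace E] {F : Type*} [NormedAddCommGroup F]
    [NormedSpace ℝ F] [FiniteDimensional ℝ F] [MeasurableSpace F] [BorelSpace F]
    {μ : Measure E} [IsGaussian μ] (hμ : ∀ L : StrongDual ℝ E, μ[L] = 0)
    (T : E →L[ℝ] F) {D : Set F} (hD : MeasurableSet D) (hconv : Convex ℝ D)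
    (hneg : ∀ x ∈ D, -x ∈ D) (y : E) : μ ((y + ·) ⁻¹' (T ⁻¹' D)) ≤ μ (T ⁻¹' D) := by
  have hT : Measurable T := T.continuous.measurable
  have hmap : IsGaussian (μ.map T) := isGaussian_map_of_measurable hT
  have hcentered (L : StrongDual ℝ F) : (μ.map T)[L] = 0 := by
    rw [integral_map hT.aemeasurable (by fun_prop)]
    exact hμ (L ∘L T)
  have := isNegInvariant_of_isGaussian (μ.map T) hcentered
  have hpreimage : (y + ·) ⁻¹' (T ⁻¹' D) = T ⁻¹' ((T y + ·) ⁻¹' D) := by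
    ext x
    simp only [Set.mem_preimage, map_add]
  rw [hpreimage, ← Measure.map_apply hT hD, ← Measure.map_apply hT (measurable_const_add _ hD)]
  exact (midpointPrekopaLeindler_of_isGaussian _).measure_preimage_add_le hD hconv hneg _

section LocallyConvex

variable {E : Type*} [AddCommGroup E] [Module ℝ E] [TopologicalSpace E]
  [IsTopologicalAddGroup E] [ContinuousSMul ℝ E] [LocallyConvexSpace ℝ E]
  [HereditarilyLindelofSpace E] {D : Set E}

lemma exists_eq_iInter_abs_le (hclosed : IsClosed D) (hconv : Convex ℝ D)
    (hneg : ∀ x ∈ D, -x ∈ D) :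
    ∃ (l : ℕ → StrongDual ℝ E) (c : ℕ → ℝ), D = ⋂ n, {x | |l n x| ≤ c n} := by
  obtain ⟨l, c, hlc⟩ := RCLike.iInter_countable_halfSpaces_eq (𝕜 := ℝ) hconv hclosed
  simp only [RCLike.re_to_real] at hlc
  refine ⟨l, c, Set.Subset.antisymm (fun x hx ↦ Set.mem_iInter.2 fun n ↦ ?_) ?_⟩
  · have hle (z : E) (hz : z ∈ D) : l n z ≤ c n := Set.mem_iInter.1 (hlc ▸ hz) n
    exact abs_le'.2 ⟨hle x hx, map_neg (l n) x ▸ hle (-x) (hneg x hx)⟩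
  · rw [← hlc]
    exact Set.iInter_mono fun n x (hx : |l n x| ≤ c n) ↦ (le_abs_self _).trans hx

lemma measure_preimage_add_le_of_isGaussian_of_isClosed [MeasurableSpace E] [BorelSpace E]
    {μ : Measure E} [IsGaussian μ] (hμ : ∀ L : StrongDual ℝ E, μ[L] = 0) (hclosed : IsClosed D)
    (hconv : Convex ℝ D) (hneg : ∀ x ∈ D, -x ∈ D) (y : E) : μ ((y + ·) ⁻¹' D) ≤ μ D := by
  obtain ⟨l, c, rfl⟩ := exists_eq_iInter_abs_le hclosed hconv hneg
  have hslab (n : ℕ) : IsClosed {x : E | |l n x| ≤ c n} :=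
    isClosed_le (by fun_prop) continuous_const
  have hlim := tendsto_measure_iInter_le (μ := μ)
    (fun n ↦ (hslab n).measurableSet.nullMeasurableSet) ⟨0, measure_ne_top μ _⟩
  refine ge_of_tendsto' hlim fun n ↦ ?_
  let T : E →L[ℝ] (Set.Iic n → ℝ) := ContinuousLinearMap.pi fun i ↦ l i
  let Q : Set (Set.Iic n → ℝ) := Set.Icc (fun i ↦ -c i) fun i ↦ c i
  have hQ : ⋂ i ≤ n, {x : E | |l i x| ≤ c i} = T ⁻¹' Q := by
    ext x
    simp [T, Q, Pi.le_def, abs_le, forall_and]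
  have hQ_neg (z : Set.Iic n → ℝ) (hz : z ∈ Q) : -z ∈ Q :=
    ⟨neg_le_neg hz.2, neg_le.1 hz.1⟩
  calc μ ((y + ·) ⁻¹' ⋂ n, {x | |l n x| ≤ c n}) ≤ μ ((y + ·) ⁻¹' (T ⁻¹' Q)) := by
        rw [← hQ]
        exact measure_mono (Set.preimage_mono
          (Set.iInter_mono fun _ ↦ Set.subset_iInter fun _ ↦ subset_rfl))
    _ ≤ μ (T ⁻¹' Q) :=
        measure_preimage_add_preimage_le_of_isGaussian hμ T measurableSet_Icc
          (convex_Icc _ _) hQ_neg y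
    _ = μ (⋂ i ≤ n, {x | |l i x| ≤ c i}) := by rw [hQ]

end LocallyConvex

lemma conv_apply_le_of_forall_measure_preimage_add_le {M : Type*} [AddCommMonoid M]
    [MeasurableSpace M] [MeasurableAdd₂ M] {μ ν : Measure M} [SFinite μ] [IsProbabilityMeasure ν]
    {D : Set M} (hD : MeasurableSet D) {c : ℝ≥0∞} (hle : ∀ y, μ ((y + ·) ⁻¹' D) ≤ c) :
    (μ ∗ ν) D ≤ c := by
  rw [Measure.conv_comm, Measure.conv, Measure.map_apply measurable_add hD,
    Measure.prod_apply (measurable_add hD)]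
  calc ∫⁻ y, μ (Prod.mk y ⁻¹' ((fun p : M × M ↦ p.1 + p.2) ⁻¹' D)) ∂ν ≤ ∫⁻ _, c ∂ν :=
        lintegral_mono hle
    _ = c := by rw [lintegral_const, measure_univ, mul_one]

lemma exists_isCompact_convex_symmetric_lt {B : Type*} [AddCommGroup B] [Module ℝ B]
    [UniformSpace B] [IsUniformAddGroup B] [ContinuousSMul ℝ B] [LocallyConvexSpace ℝ B]
    [CompleteSpace B] [MeasurableSpace B] [BorelSpace B] {ν : Measure B}
    [ν.InnerRegularCompactLTTop] {A : Set B} (hA : IsClosed A) (hconv : Convex ℝ A)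
    (hneg : ∀ b ∈ A, -b ∈ A) (hν : ν A ≠ ∞) {t : ℝ≥0∞} (ht : t < ν A) :
    ∃ C ⊆ A, IsCompact C ∧ Convex ℝ C ∧ (∀ b ∈ C, -b ∈ C) ∧ t < ν C := by
  obtain ⟨C, hCA, hC, htC⟩ := hA.measurableSet.exists_lt_isCompact_of_ne_top hν ht
  let H := closure (convexHull ℝ (C ∪ -C))
  have hCH : C ⊆ H :=
    Set.subset_union_left.trans ((subset_convexHull ℝ _).trans subset_closure)
  have hHA : H ⊆ A := closure_minimal
    (convexHull_min (Set.union_subset hCA fun b hb ↦ neg_neg b ▸ hneg _ (hCA hb)) hconv) hA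
  have hH : TotallyBounded H := (hC.union hC.neg).totallyBounded.convexHull.closure
  have hH_neg : -H = H := by
    simp only [H, neg_closure, ← convexHull_neg, Set.union_neg, neg_neg, Set.union_comm]
  exact ⟨H, hHA, hH.isCompact_of_isClosed isClosed_closure, (convex_convexHull ℝ _).closure,
    fun b hb ↦ hH_neg ▸ Set.neg_mem_neg.2 hb, htC.trans_le (measure_mono hCH)⟩

section Image

variable {E B : Type*} [AddCommGroup E] [Module ℝ E] [TopologicalSpace E] [T2Space E]
  [MeasurableSpace E] [BorelSpace E]
  [AddCommGroup B] [Module ℝ B] [UniformSpace B] [IsUniformAddGroup B] [ContinuousSMul ℝ B]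
  [LocallyConvexSpace ℝ B] [CompleteSpace B] [T0Space B] [(uniformity B).IsCountablyGenerated]
  [TopologicalSpace.SeparableSpace B] {ι : B →L[ℝ] E} {A : Set B}

lemma exists_isCompact_convex_subset_image_lt (hι : Function.Injective ι) {μ : Measure E}
    [IsFiniteMeasure μ] (hA : IsClosed A) (hconv : Convex ℝ A) (hneg : ∀ b ∈ A, -b ∈ A)
    {t : ℝ≥0∞} (ht : t < μ (ι '' A)) :
    ∃ D ⊆ ι '' A, IsCompact D ∧ Convex ℝ D ∧ (∀ x ∈ D, -x ∈ D) ∧ t < μ D := by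
  borelize B
  have := UniformSpace.secondCountable_of_separable B
  have hι_emb : MeasurableEmbedding ι := ι.continuous.measurableEmbedding hι
  have : IsFiniteMeasure (μ.comap ι) :=
    ⟨by rw [hι_emb.comap_apply]; exact measure_lt_top _ _⟩
  rw [← hι_emb.comap_apply] at ht
  obtain ⟨C, hCA, hC, hC_conv, hC_neg, htC⟩ :=
    exists_isCompact_convex_symmetric_lt hA hconv hneg (measure_ne_top _ A) ht
  refine ⟨ι '' C, Set.image_mono hCA, hC.image ι.continuous, hC_conv.linear_image ι.toLinearMap,
    ?_, hι_emb.comap_apply μ C ▸ htC⟩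
  rintro _ ⟨b, hb, rfl⟩
  exact ⟨-b, hC_neg b hb, map_neg ι b⟩

variable [IsTopologicalAddGroup E] [ContinuousSMul ℝ E] [LocallyConvexSpace ℝ E]
  [SecondCountableTopology E]

lemma conv_image_le_of_isGaussian (hι : Function.Injective ι) {μ : Measure E} [IsGaussian μ]
    (hμ : ∀ L : StrongDual ℝ E, μ[L] = 0) (ν : Measure E) [IsProbabilityMeasure ν]
    (hA : IsClosed A) (hconv : Convex ℝ A) (hneg : ∀ b ∈ A, -b ∈ A) :
    (μ ∗ ν) (ι '' A) ≤ μ (ι '' A) := by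
  refine le_of_forall_lt fun t ht ↦ ?_
  obtain ⟨D, hDA, hD, hD_conv, hD_neg, htD⟩ :=
    exists_isCompact_convex_subset_image_lt hι hA hconv hneg ht
  calc t < (μ ∗ ν) D := htD
    _ ≤ μ D := conv_apply_le_of_forall_measure_preimage_add_le hD.measurableSet
        (measure_preimage_add_le_of_isGaussian_of_isClosed hμ hD.isClosed hD_conv hD_neg)
    _ ≤ μ (ι '' A) := measure_mono hDA

theorem anderson_sum_field_general (hι : Function.Injective ι) {Ω : Type*} [MeasurableSpace Ω]
    {P : Measure Ω} [IsProbabilityMeasure P] {X₁ X₂ : Ω → E} (hX₁ : Measurable X₁)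
    (hX₂ : Measurable X₂)
    (hX₁gauss : ∀ L : StrongDual ℝ E, ∃ v : NNReal, P.map (fun ω ↦ L (X₁ ω)) = gaussianReal 0 v)
    (hindep : IndepFun X₁ X₂ P) (hA : IsClosed A) (hconv : Convex ℝ A)
    (hneg : ∀ b ∈ A, -b ∈ A) :
    P {ω | ∃ b ∈ A, ι b = X₁ ω + X₂ ω} ≤ P {ω | ∃ b ∈ A, ι b = X₁ ω} := by
  have hgauss (L : StrongDual ℝ E) : ∃ v : NNReal, (P.map X₁).map L = gaussianReal 0 v := by
    rw [Measure.map_map L.continuous.measurable hX₁]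
    exact hX₁gauss L
  have hP : IsGaussian (P.map X₁) := isGaussian_of_map_eq_gaussianReal fun L ↦ ⟨0, hgauss L⟩
  have hcentered (L : StrongDual ℝ E) : (P.map X₁)[L] = 0 := by
    obtain ⟨v, hv⟩ := hgauss L
    rw [← integral_map (f := fun x : ℝ ↦ x) L.continuous.aemeasurable (by fun_prop), hv,
      integral_id_gaussianReal]
  have := Measure.isProbabilityMeasure_map (μ := P) hX₂.aemeasurable
  have hmeas : MeasurableSet (ι '' A) := by
    borelize B
    have := UniformSpace.secondCountable_of_separable B
    exact (ι.continuous.measurableEmbedding hι).measurableSet_image.2 hA.measurableSet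
  calc P {ω | ∃ b ∈ A, ι b = X₁ ω + X₂ ω} = P.map (X₁ + X₂) (ι '' A) :=
        (Measure.map_apply (hX₁.add hX₂) hmeas).symm
    _ = (P.map X₁ ∗ P.map X₂) (ι '' A) := by rw [hindep.map_add_eq_map_conv_map hX₁ hX₂]
    _ ≤ P.map X₁ (ι '' A) := conv_image_le_of_isGaussian hι hcentered _ hA hconv hneg
    _ = P {ω | ∃ b ∈ A, ι b = X₁ ω} := Measure.map_apply hX₁ hmeas

end Image

/-- for two independent centered Gaussian random elements `X₁`, `X₂` of
`C(K, ℝ)` (`K ⊆ ℝ^d` compact), a separable Banach space `B` continuously embedded in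
`C(K, ℝ)` via an injective continuous linear map `ι`, and any `r > 0`,
`P(X₁ + X₂ ∈ ι({‖·‖_B ≤ r})) ≤ P(X₁ ∈ ι({‖·‖_B ≤ r}))`. -/
theorem anderson_sum_field {d : ℕ} (K : Set (EuclideanSpace ℝ (Fin d)))
    (hK : IsCompact K)
    {B : Type*} [NormedAddCommGroup B] [NormedSpace ℝ B] [CompleteSpace B]
    [TopologicalSpace.SeparableSpace B]
    (ι : B →L[ℝ] C(K, ℝ)) (hι : Function.Injective ι)
    {Ω : Type*} [MeasurableSpace Ω] (P : Measure Ω) [IsProbabilityMeasure P]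
    [MeasurableSpace C(K, ℝ)] [BorelSpace C(K, ℝ)]
    (X₁ X₂ : Ω → C(K, ℝ)) (hX₁meas : Measurable X₁) (hX₂meas : Measurable X₂)
    (hX₁gauss : ∀ L : C(K, ℝ) →L[ℝ] ℝ,
      ∃ v : NNReal, P.map (fun ω => L (X₁ ω)) = gaussianReal 0 v)
    (hX₂gauss : ∀ L : C(K, ℝ) →L[ℝ] ℝ,
      ∃ v : NNReal, P.map (fun ω => L (X₂ ω)) = gaussianReal 0 v)
    (hindep : IndepFun X₁ X₂ P)
    (r : ℝ) (hr : 0 < r) :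
    P {ω | ∃ b : B, ‖b‖ ≤ r ∧ ι b = X₁ ω + X₂ ω}
      ≤ P {ω | ∃ b : B, ‖b‖ ≤ r ∧ ι b = X₁ ω} := by
  have : CompactSpace K := isCompact_iff_compactSpace.1 hK
  simpa using anderson_sum_field_general (P := P) hι hX₁meas hX₂meas hX₁gauss hindep
    (A := Metric.closedBall 0 r) Metric.isClosed_closedBall (convex_closedBall 0 r) (by simp)
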